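/- For q ≥ 2, the four subspaces V_r, V_l, V_[adj] and V_{adj} are invariant under φ⊗² and carry pairwise equivalent irreducible subrepresentations of φ⊗² (all equivalent to the adjoint representation of the Clifford group). -/

import Mathlib

open Matrix MeasureTheory
open scoped Kronecker

noncomputable section

namespace CliffordPaper

/-- The single-qubit Pauli matrices `1, X, Y, Z`. -/
def pauli1 : Fin 4 → Matrix (Fin 2) (Fin 2) ℂ :=
  ![1, !![0, 1; 1, 0], !![0, -Complex.I; Complex.I, 0], !![1, 0; 0, -1]]

/-- Index type for the computational basis of `q` qubits. -/
abbrev Idx (q : ℕ) := Fin q → Fin 2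

/-- The space `M_d` of `d × d` complex matrices, `d = 2^q`. -/
abbrev Mat (q : ℕ) := Matrix (Idx q) (Idx q) ℂ

/-- The space `M_d ⊗ M_d`, realized as matrices indexed by the product index set
(the tensor factors combine via the Kronecker product `⊗ₖ`). -/
abbrev BMat (q : ℕ) := Matrix (Idx q × Idx q) (Idx q × Idx q) ℂ

/-- The `q`-fold Kronecker product of single-qubit Paulis with labels `a`. -/
def PauliOp {q : ℕ} (a : Fin q → Fin 4) : Mat q :=
  Matrix.of fun x y => ∏ i, pauli1 (a i) (x i) (y i)

/-- `√d` as a complex number, where `d = 2^q`. -/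
def sqrtd (q : ℕ) : ℂ := (Real.sqrt (2 ^ q) : ℝ)

/-- The set `σ̂_q` of normalized Pauli operators. -/
def sigmaHat (q : ℕ) : Set (Mat q) :=
  {M | ∃ a : Fin q → Fin 4, M = (sqrtd q)⁻¹ • PauliOp a}

/-- The normalized identity `σ₀ = 1/√d`. -/
def sigma0 (q : ℕ) : Mat q := (sqrtd q)⁻¹ • (1 : Mat q)

/-- `σ_q = σ̂_q \ {σ₀}`. -/
def sigmaSet (q : ℕ) : Set (Mat q) := sigmaHat q \ {sigma0 q}

/-- `N_τ`: the normalized nonidentity Paulis anticommuting with `τ`. -/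
def NSet {q : ℕ} (τ : Mat q) : Set (Mat q) :=
  {σ | σ ∈ sigmaSet q ∧ σ * τ + τ * σ = 0}

/-- `C_τ`: the normalized nonidentity Paulis distinct from `τ` commuting with `τ`. -/
def CSet {q : ℕ} (τ : Mat q) : Set (Mat q) :=
  {σ | σ ∈ sigmaSet q ∧ σ ≠ τ ∧ σ * τ = τ * σ}

/-- `Ĉ_τ`: the normalized Paulis commuting with `τ`. -/
def CHatSet {q : ℕ} (τ : Mat q) : Set (Mat q) :=
  {σ | σ ∈ sigmaHat q ∧ σ * τ = τ * σ}

/-- The normalized product `σ·τ = √d στ`. -/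
def nprod {q : ℕ} (σ τ : Mat q) : Mat q := sqrtd q • (σ * τ)

/-- The Clifford normalizer `𝒩_q`: unitaries mapping normalized Paulis to
signed normalized Paulis under conjugation. -/
def Cliff (q : ℕ) : Set (Mat q) :=
  {U | U ∈ Matrix.unitaryGroup (Idx q) ℂ ∧
    ∀ σ ∈ sigmaHat q, ∃ τ ∈ sigmaHat q, U * σ * Uᴴ = τ ∨ U * σ * Uᴴ = -τ}

/-- The two-copy representation `φ⊗²(U) : A ⊗ B ↦ (UAU†) ⊗ (UBU†)`, extended linearly. -/
def twoCopy {q : ℕ} (U : Mat q) : BMat q →ₗ[ℂ] BMat q where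
  toFun M := (U ⊗ₖ U) * M * (U ⊗ₖ U)ᴴ
  map_add' M N := by
    show (U ⊗ₖ U) * (M + N) * (U ⊗ₖ U)ᴴ = (U ⊗ₖ U) * M * (U ⊗ₖ U)ᴴ + (U ⊗ₖ U) * N * (U ⊗ₖ U)ᴴ
    rw [Matrix.mul_add, Matrix.add_mul]
  map_smul' c M := by
    show (U ⊗ₖ U) * (c • M) * (U ⊗ₖ U)ᴴ = c • ((U ⊗ₖ U) * M * (U ⊗ₖ U)ᴴ)
    rw [Matrix.mul_smul, Matrix.smul_mul]

/-- The Hilbert–Schmidt inner product `⟨A, B⟩ = tr(A† B)`. -/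
def hs {q : ℕ} (A B : BMat q) : ℂ := (Aᴴ * B).trace

/-- A subspace is invariant under the two-copy representation of `𝒩_q`. -/
def IsInvariant (q : ℕ) (W : Submodule ℂ (BMat q)) : Prop :=
  ∀ U ∈ Cliff q, ∀ v ∈ W, twoCopy U v ∈ W

/-- A nonzero invariant subspace carries an irreducible subrepresentation. -/
def CarriesIrred (q : ℕ) (W : Submodule ℂ (BMat q)) : Prop :=
  W ≠ ⊥ ∧ IsInvariant q W ∧ ∀ W' ≤ W, IsInvariant q W' → W' = ⊥ ∨ W' = W

/-- Two invariant subspaces carry equivalent subrepresentations: there is a linear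
isomorphism between them intertwining the two-copy representation. -/
def EquivRep (q : ℕ) (W W' : Submodule ℂ (BMat q)) : Prop :=
  ∃ T : BMat q →ₗ[ℂ] BMat q, Submodule.map T W = W' ∧
    (∀ x ∈ W, T x = 0 → x = 0) ∧
    ∀ U ∈ Cliff q, ∀ x ∈ W, T (twoCopy U x) = twoCopy U (T x)

/-- `S_{σ,τ} = (σ⊗τ + τ⊗σ)/√2`. -/
def SVec {q : ℕ} (σ τ : Mat q) : BMat q :=
  ((Real.sqrt 2 : ℂ))⁻¹ • (σ ⊗ₖ τ + τ ⊗ₖ σ)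

/-- `A_{σ,τ} = (σ⊗τ − τ⊗σ)/√2`. -/
def AVec {q : ℕ} (σ τ : Mat q) : BMat q :=
  ((Real.sqrt 2 : ℂ))⁻¹ • (σ ⊗ₖ τ - τ ⊗ₖ σ)

/-- The trivial sector `V_id`. -/
def Vid (q : ℕ) : Submodule ℂ (BMat q) :=
  Submodule.span ℂ {sigma0 q ⊗ₖ sigma0 q}

/-- The right adjoint sector `V_r`. -/
def Vr (q : ℕ) : Submodule ℂ (BMat q) :=
  Submodule.span ℂ {M | ∃ τ ∈ sigmaSet q, M = sigma0 q ⊗ₖ τ}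

/-- The left adjoint sector `V_l`. -/
def Vl (q : ℕ) : Submodule ℂ (BMat q) :=
  Submodule.span ℂ {M | ∃ τ ∈ sigmaSet q, M = τ ⊗ₖ sigma0 q}

/-- The diagonal sector `V_d`. -/
def Vdiag (q : ℕ) : Submodule ℂ (BMat q) :=
  Submodule.span ℂ {M | ∃ τ ∈ sigmaSet q, M = τ ⊗ₖ τ}

/-- The symmetric commuting sector `V_[S]`. -/
def VScom (q : ℕ) : Submodule ℂ (BMat q) :=
  Submodule.span ℂ {M | ∃ τ ∈ sigmaSet q, ∃ σ ∈ CSet τ, M = SVec σ τ}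

/-- The symmetric anti-commuting sector `V_{S}`. -/
def VSanti (q : ℕ) : Submodule ℂ (BMat q) :=
  Submodule.span ℂ {M | ∃ τ ∈ sigmaSet q, ∃ σ ∈ NSet τ, M = SVec σ τ}

/-- The antisymmetric commuting sector `V_[A]`. -/
def VAcom (q : ℕ) : Submodule ℂ (BMat q) :=
  Submodule.span ℂ {M | ∃ τ ∈ sigmaSet q, ∃ σ ∈ CSet τ, M = AVec σ τ}

/-- The antisymmetric anti-commuting sector `V_{A}`. -/
def VAanti (q : ℕ) : Submodule ℂ (BMat q) :=
  Submodule.span ℂ {M | ∃ τ ∈ sigmaSet q, ∃ σ ∈ NSet τ, M = AVec σ τ}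

/-- `V_[A]` presented with the spanning vectors `A_{σ,σ·τ}`, `σ ∈ C_τ`. -/
def VAcom' (q : ℕ) : Submodule ℂ (BMat q) :=
  Submodule.span ℂ {M | ∃ τ ∈ sigmaSet q, ∃ σ ∈ CSet τ, M = AVec σ (nprod σ τ)}

/-- `V_0 = span{Σ_{σ∈σ_q} σ⊗σ}`. -/
def V0diag (q : ℕ) : Submodule ℂ (BMat q) :=
  Submodule.span ℂ {∑ᶠ σ ∈ sigmaSet q, σ ⊗ₖ σ}

/-- `V_1`, the "positive" part of the diagonal sector. -/
def V1diag (q : ℕ) : Submodule ℂ (BMat q) :=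
  Submodule.span ℂ {v | ∃ lam : Mat q → ℂ,
    v = ∑ᶠ σ ∈ sigmaSet q, lam σ • (σ ⊗ₖ σ) ∧
    (∑ᶠ σ ∈ sigmaSet q, lam σ) = 0 ∧
    ∀ τ ∈ sigmaSet q, (∑ᶠ σ ∈ NSet τ, lam σ) = -((2 ^ q : ℂ) / 2) * lam τ}

/-- `V_2`, the "negative" part of the diagonal sector. -/
def V2diag (q : ℕ) : Submodule ℂ (BMat q) :=
  Submodule.span ℂ {v | ∃ lam : Mat q → ℂ,
    v = ∑ᶠ σ ∈ sigmaSet q, lam σ • (σ ⊗ₖ σ) ∧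
    (∑ᶠ σ ∈ sigmaSet q, lam σ) = 0 ∧
    ∀ τ ∈ sigmaSet q, (∑ᶠ σ ∈ NSet τ, lam σ) = ((2 ^ q : ℂ) / 2) * lam τ}

/-- `v^[adj]_τ = (2|C_τ|)^{-1/2} Σ_{σ∈C_τ} S_{σ,σ·τ}`. -/
def vadjS {q : ℕ} (τ : Mat q) : BMat q :=
  ((Real.sqrt (2 * ((CSet τ).ncard : ℝ)) : ℂ))⁻¹ • ∑ᶠ σ ∈ CSet τ, SVec σ (nprod σ τ)

/-- `v^{adj}_τ = (2|N_τ|)^{-1/2} Σ_{σ∈N_τ} A_{σ,iσ·τ}`. -/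
def vadjA {q : ℕ} (τ : Mat q) : BMat q :=
  ((Real.sqrt (2 * ((NSet τ).ncard : ℝ)) : ℂ))⁻¹ •
    ∑ᶠ σ ∈ NSet τ, AVec σ (Complex.I • nprod σ τ)

/-- The symmetric adjoint sector `V_[adj]`. -/
def VadjS (q : ℕ) : Submodule ℂ (BMat q) :=
  Submodule.span ℂ {M | ∃ τ ∈ sigmaSet q, M = vadjS τ}

/-- The antisymmetric adjoint sector `V_{adj}`. -/
def VadjA (q : ℕ) : Submodule ℂ (BMat q) :=
  Submodule.span ℂ {M | ∃ τ ∈ sigmaSet q, M = vadjA τ}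

/-- The orthogonal complement `V^⊥_{adj}` of `V_{adj}` inside `V_{A}`. -/
def VadjAperp (q : ℕ) : Submodule ℂ (BMat q) :=
  Submodule.span ℂ {v | v ∈ VAanti q ∧ ∀ w ∈ VadjA q, hs w v = 0}

/-- `V_{1}^τ`. -/
def V1symτ (q : ℕ) (τ : Mat q) : Submodule ℂ (BMat q) :=
  Submodule.span ℂ {v | ∃ lam : Mat q → ℂ,
    v = ∑ᶠ σ ∈ NSet τ, lam σ • SVec σ (Complex.I • nprod σ τ) ∧
    ∀ ν ∈ NSet τ, (∑ᶠ σ ∈ NSet τ ∩ CSet ν, lam σ) - (∑ᶠ σ ∈ NSet τ ∩ NSet ν, lam σ)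
      = ((2 ^ q : ℂ) / 2) * lam ν}

/-- `V_{2}^τ`. -/
def V2symτ (q : ℕ) (τ : Mat q) : Submodule ℂ (BMat q) :=
  Submodule.span ℂ {v | ∃ lam : Mat q → ℂ,
    v = ∑ᶠ σ ∈ NSet τ, lam σ • SVec σ (Complex.I • nprod σ τ) ∧
    ∀ ν ∈ NSet τ, (∑ᶠ σ ∈ NSet τ ∩ CSet ν, lam σ) - (∑ᶠ σ ∈ NSet τ ∩ NSet ν, lam σ)
      = -((2 ^ q : ℂ) / 2) * lam ν}

/-- `V_{1} = ⊕_τ V_{1}^τ`. -/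
def V1sym (q : ℕ) : Submodule ℂ (BMat q) := ⨆ τ ∈ sigmaSet q, V1symτ q τ

/-- `V_{2} = ⊕_τ V_{2}^τ`. -/
def V2sym (q : ℕ) : Submodule ℂ (BMat q) := ⨆ τ ∈ sigmaSet q, V2symτ q τ

/-- The defining property of the map `Θ` on `V_[A]`. -/
def ThetaProp (q : ℕ) (Θ : BMat q →ₗ[ℂ] BMat q) : Prop :=
  ∀ τ ∈ sigmaSet q, ∀ σ ∈ CSet τ,
    Θ (AVec σ (nprod σ τ)) =
      (∑ᶠ σ' ∈ NSet τ ∩ CSet σ, AVec σ' (Complex.I • nprod σ' τ)) -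
      ∑ᶠ σ' ∈ NSet τ ∩ NSet σ, AVec σ' (Complex.I • nprod σ' τ)

/-- `V` = span of off-diagonal products `σ⊗σ̂`, `σ ≠ σ̂`. -/
def Voff (q : ℕ) : Submodule ℂ (BMat q) :=
  Submodule.span ℂ {M | ∃ σ ∈ sigmaSet q, ∃ σ' ∈ sigmaSet q, σ ≠ σ' ∧ M = σ ⊗ₖ σ'}

/-- `V^τ` = span of the `σ⊗σ̂` with `σ·σ̂ ∈ {τ, −τ, iτ, −iτ}`. -/
def Vtau (q : ℕ) (τ : Mat q) : Submodule ℂ (BMat q) :=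
  Submodule.span ℂ {M | ∃ σ ∈ sigmaSet q, ∃ σ' ∈ sigmaSet q,
    (nprod σ σ' = τ ∨ nprod σ σ' = -τ ∨ nprod σ σ' = Complex.I • τ ∨
      nprod σ σ' = -(Complex.I • τ)) ∧ M = σ ⊗ₖ σ'}


lemma pauli1_complete (x y z w : Fin 2) :
    ∑ a, pauli1 a x y * pauli1 a z w = if x = w ∧ y = z then 2 else 0 := by
  fin_cases x <;> fin_cases y <;> fin_cases z <;> fin_cases w <;>
    simp [pauli1, Fin.sum_univ_four] <;> norm_num

lemma pauli1_mul (s t : Fin 4) : ∃ (c : ℂ) (u : Fin 4), pauli1 s * pauli1 t = c • pauli1 u := by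
  fin_cases s <;> fin_cases t
  · exact ⟨1, 0, by ext i j; fin_cases i <;> fin_cases j <;> simp [pauli1]⟩
  · exact ⟨1, 1, by ext i j; fin_cases i <;> fin_cases j <;> simp [pauli1]⟩
  · exact ⟨1, 2, by ext i j; fin_cases i <;> fin_cases j <;> simp [pauli1]⟩
  · exact ⟨1, 3, by ext i j; fin_cases i <;> fin_cases j <;> simp [pauli1]⟩
  · exact ⟨1, 1, by ext i j; fin_cases i <;> fin_cases j <;> simp [pauli1]⟩
  · exact ⟨1, 0, by ext i j; fin_cases i <;> fin_cases j <;> simp [pauli1]⟩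
  · exact ⟨Complex.I, 3, by ext i j; fin_cases i <;> fin_cases j <;> simp [pauli1]⟩
  · exact ⟨-Complex.I, 2, by ext i j; fin_cases i <;> fin_cases j <;> simp [pauli1]⟩
  · exact ⟨1, 2, by ext i j; fin_cases i <;> fin_cases j <;> simp [pauli1]⟩
  · exact ⟨-Complex.I, 3, by ext i j; fin_cases i <;> fin_cases j <;> simp [pauli1]⟩
  · exact ⟨1, 0, by ext i j; fin_cases i <;> fin_cases j <;> simp [pauli1]⟩
  · exact ⟨Complex.I, 1, by ext i j; fin_cases i <;> fin_cases j <;> simp [pauli1]⟩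
  · exact ⟨1, 3, by ext i j; fin_cases i <;> fin_cases j <;> simp [pauli1]⟩
  · exact ⟨Complex.I, 2, by ext i j; fin_cases i <;> fin_cases j <;> simp [pauli1]⟩
  · exact ⟨-Complex.I, 1, by ext i j; fin_cases i <;> fin_cases j <;> simp [pauli1]⟩
  · exact ⟨1, 0, by ext i j; fin_cases i <;> fin_cases j <;> simp [pauli1]⟩

lemma pauli1_comm (s t : Fin 4) : ∃ c : ℂ, (c = 1 ∨ c = -1) ∧
    pauli1 s * pauli1 t = c • (pauli1 t * pauli1 s) := by
  by_cases h : s = 0 ∨ t = 0 ∨ s = t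
  · refine ⟨1, Or.inl rfl, ?_⟩
    rcases h with rfl | rfl | rfl <;> simp [pauli1]
  · refine ⟨-1, Or.inr rfl, ?_⟩
    revert h
    fin_cases s <;> fin_cases t <;> simp [pauli1]

lemma pauli1_trace (s t : Fin 4) :
    ∑ x, ∑ y, pauli1 s x y * pauli1 t y x = if s = t then 2 else 0 := by
  fin_cases s <;> fin_cases t <;> simp [pauli1] <;> norm_num

lemma pauli1_sq (s : Fin 4) : pauli1 s * pauli1 s = 1 := by
  fin_cases s <;> ext i j <;> fin_cases i <;> fin_cases j <;> simp [pauli1]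

lemma pauli1_herm (s : Fin 4) (x y : Fin 2) : star (pauli1 s x y) = pauli1 s y x := by
  fin_cases s <;> fin_cases x <;> fin_cases y <;> simp [pauli1]

section Helpers

variable {q : ℕ}

lemma P_complete (x y z w : Idx q) :
    ∑ a, PauliOp a x y * PauliOp a z w = if x = w ∧ y = z then (2 : ℂ) ^ q else 0 := by
  simp only [PauliOp, Matrix.of_apply, ← Finset.prod_mul_distrib]
  rw [← Fintype.piFinset_univ, ← Finset.prod_univ_sum (fun _ => Finset.univ)
    (fun i a => pauli1 a (x i) (y i) * pauli1 a (z i) (w i))]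
  simp only [pauli1_complete]
  split_ifs with h
  · obtain ⟨rfl, rfl⟩ := h; simp
  · have : ∃ i, ¬ (x i = w i ∧ y i = z i) := by
      by_contra hc; push Not at hc
      exact h ⟨funext fun i => (hc i).1, funext fun i => (hc i).2⟩
    obtain ⟨i, hi⟩ := this
    exact Finset.prod_eq_zero (Finset.mem_univ i) (if_neg hi)

lemma P_mul_apply (a b : Fin q → Fin 4) (x z : Idx q) :
    (PauliOp a * PauliOp b) x z = ∏ i, (pauli1 (a i) * pauli1 (b i)) (x i) (z i) := by
  simp only [Matrix.mul_apply, PauliOp, Matrix.of_apply, ← Finset.prod_mul_distrib]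
  rw [← Fintype.piFinset_univ, ← Finset.prod_univ_sum (fun _ => Finset.univ)
    (fun i y => pauli1 (a i) (x i) y * pauli1 (b i) y (z i))]

lemma P_mul (a b : Fin q → Fin 4) : ∃ (c : ℂ) (u : Fin q → Fin 4),
    PauliOp a * PauliOp b = c • PauliOp u := by
  choose c u h using fun i => pauli1_mul (a i) (b i)
  refine ⟨∏ i, c i, u, ?_⟩
  ext x z
  rw [P_mul_apply]
  simp [h, PauliOp, Finset.prod_mul_distrib]

lemma P_comm (a b : Fin q → Fin 4) :
    PauliOp a * PauliOp b = PauliOp b * PauliOp a ∨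
    PauliOp a * PauliOp b = - (PauliOp b * PauliOp a) := by
  choose c hc h using fun i => pauli1_comm (a i) (b i)
  have h1 : PauliOp a * PauliOp b = (∏ i, c i) • (PauliOp b * PauliOp a) := by
    ext x z
    rw [Matrix.smul_apply, P_mul_apply, P_mul_apply]
    simp [h, Finset.prod_mul_distrib]
  have h2 : (∏ i, c i) = 1 ∨ (∏ i, c i) = -1 := by
    refine Finset.prod_induction c (fun c => c = 1 ∨ c = -1) ?_ (Or.inl rfl) (fun i _ => hc i)
    rintro _ _ (rfl | rfl) (rfl | rfl) <;> simp
  rcases h2 with h2 | h2 <;> rw [h2] at h1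
  · left; simpa using h1
  · right; simpa using h1

lemma P_zero : PauliOp (0 : Fin q → Fin 4) = 1 := by
  ext x y
  simp only [PauliOp, Matrix.of_apply, pauli1, Matrix.one_apply]
  split_ifs with h
  · subst h; simp
  · obtain ⟨i, hi⟩ := Function.ne_iff.mp h
    exact Finset.prod_eq_zero (Finset.mem_univ i) (by simp [hi])

lemma P_sq (a : Fin q → Fin 4) : PauliOp a * PauliOp a = 1 := by
  rw [← P_zero]
  ext x y
  rw [P_mul_apply]
  simp only [pauli1_sq]
  simp [PauliOp, pauli1]

lemma P_herm (a : Fin q → Fin 4) : (PauliOp a)ᴴ = PauliOp a := by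
  ext x y
  simp only [Matrix.conjTranspose_apply, PauliOp, Matrix.of_apply, star_prod, pauli1_herm]

lemma P_trace_mul (a b : Fin q → Fin 4) :
    (PauliOp a * PauliOp b).trace = if a = b then (2 : ℂ) ^ q else 0 := by
  simp only [Matrix.trace, Matrix.diag, P_mul_apply]
  rw [← Fintype.piFinset_univ, ← Finset.prod_univ_sum (fun _ => Finset.univ)
    (fun i y => (pauli1 (a i) * pauli1 (b i)) y y)]
  simp only [Matrix.mul_apply, pauli1_trace]
  split_ifs with h
  · subst h; simp
  · obtain ⟨i, hi⟩ := Function.ne_iff.mp h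
    exact Finset.prod_eq_zero (Finset.mem_univ i) (if_neg hi)

lemma P_inj : Function.Injective (PauliOp : (Fin q → Fin 4) → Mat q) := by
  intro a b h
  by_contra hab
  have h1 := P_trace_mul a b
  rw [if_neg hab, ← h, P_trace_mul, if_pos rfl] at h1
  exact absurd h1 (pow_ne_zero _ two_ne_zero)

lemma P_trace (a : Fin q → Fin 4) (ha : a ≠ 0) : (PauliOp a).trace = 0 := by
  have := P_trace_mul a 0
  rwa [P_zero, mul_one, if_neg ha] at this

lemma P_twirl (X : Mat q) :
    ∑ a, PauliOp a * X * PauliOp a = ((2 : ℂ) ^ q * X.trace) • (1 : Mat q) := by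
  ext x w
  simp only [Matrix.sum_apply, Matrix.mul_apply, Finset.sum_mul]
  rw [Finset.sum_comm]
  have : ∀ z, ∑ a, ∑ y, PauliOp a x y * X y z * PauliOp a z w 
      = ∑ y, X y z * if x = w ∧ y = z then (2 : ℂ) ^ q else 0 := by
    intro z
    rw [Finset.sum_comm]
    refine Finset.sum_congr rfl fun y _ => ?_
    rw [← P_complete, Finset.mul_sum]
    exact Finset.sum_congr rfl fun a _ => by ring
  simp only [this]
  by_cases h : x = w
  · subst h
    simp [Matrix.trace, Finset.mul_sum, mul_comm]
  · simp [h]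

lemma P_expand (A : Mat q) :
    ∑ a, (PauliOp a * A).trace • PauliOp a = ((2 : ℂ) ^ q) • A := by
  ext z w
  simp only [Matrix.sum_apply, Matrix.smul_apply, Matrix.trace, Matrix.diag, Matrix.mul_apply,
    smul_eq_mul, Finset.sum_mul]
  rw [Finset.sum_comm]
  have : ∀ x, ∑ a, ∑ y, PauliOp a x y * A y x * PauliOp a z w 
      = ∑ y, A y x * if x = w ∧ y = z then (2 : ℂ) ^ q else 0 := by
    intro x
    rw [Finset.sum_comm]
    refine Finset.sum_congr rfl fun y _ => ?_
    rw [← P_complete, Finset.mul_sum]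
    exact Finset.sum_congr rfl fun a _ => by ring
  simp only [this]
  simp [ite_and, mul_comm]

lemma d_ne : ((2 : ℂ) ^ q) ≠ 0 := pow_ne_zero _ two_ne_zero

lemma sqrtd_mul : sqrtd q * sqrtd q = (2 : ℂ) ^ q := by
  unfold sqrtd
  rw [← Complex.ofReal_mul, Real.mul_self_sqrt (by positivity)]
  simp

lemma sqrtd_ne : sqrtd q ≠ 0 := by
  intro h
  have := sqrtd_mul (q := q)
  rw [h, mul_zero] at this
  exact d_ne this.symm

lemma mem_sigmaSet_iff (M : Mat q) :
    M ∈ sigmaSet q ↔ ∃ a, a ≠ 0 ∧ M = (sqrtd q)⁻¹ • PauliOp a := by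
  constructor
  · rintro ⟨⟨a, rfl⟩, h⟩
    refine ⟨a, ?_, rfl⟩
    rintro rfl
    exact h (by simp [sigma0, P_zero])
  · rintro ⟨a, ha, rfl⟩
    refine ⟨⟨a, rfl⟩, ?_⟩
    intro h
    simp only [sigma0, Set.mem_singleton_iff] at h
    have h2 := smul_right_injective (Mat q) (inv_ne_zero (sqrtd_ne (q := q))) h
    rw [← P_zero] at h2
    exact ha (P_inj h2)

/-- Traceless matrices. -/
def Tl (q : ℕ) : Submodule ℂ (Mat q) := LinearMap.ker (Matrix.traceLinearMap (Idx q) ℂ ℂ)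

lemma mem_Tl (A : Mat q) : A ∈ Tl q ↔ A.trace = 0 := by
  simp [Tl]

lemma Tl_eq_span : Tl q = Submodule.span ℂ (sigmaSet q) := by
  apply le_antisymm
  · intro A hA
    rw [mem_Tl] at hA
    have h := P_expand A
    have h2 : A = ((2 : ℂ) ^ q)⁻¹ • ∑ a, (PauliOp a * A).trace • PauliOp a := by
      rw [h, smul_smul, inv_mul_cancel₀ d_ne, one_smul]
    rw [h2]
    refine Submodule.smul_mem _ _ (Submodule.sum_mem _ fun a _ => ?_)
    by_cases ha : a = 0
    · subst ha
      simp [P_zero, hA]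
    · have : PauliOp a = sqrtd q • ((sqrtd q)⁻¹ • PauliOp a) := by
        rw [smul_smul, mul_inv_cancel₀ sqrtd_ne, one_smul]
      rw [this]
      exact Submodule.smul_mem _ _ (Submodule.smul_mem _ _
        (Submodule.subset_span ((mem_sigmaSet_iff _).2 ⟨a, ha, rfl⟩)))
  · rw [Submodule.span_le]
    intro M hM
    obtain ⟨a, ha, rfl⟩ := (mem_sigmaSet_iff _).1 hM
    simp [mem_Tl, P_trace a ha]

lemma Cliff_mul {U : Mat q} (hU : U ∈ Cliff q) : U * Uᴴ = 1 ∧ Uᴴ * U = 1 := by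
  have := hU.1
  rw [Matrix.mem_unitaryGroup_iff] at this
  have h2 := hU.1
  rw [Matrix.mem_unitaryGroup_iff'] at h2
  exact ⟨this, h2⟩

lemma Tl_inv {U : Mat q} (hU : U ∈ Cliff q) {A : Mat q} (hA : A ∈ Tl q) : U * A * Uᴴ ∈ Tl q := by
  rw [mem_Tl] at *
  rw [Matrix.trace_mul_comm, ← Matrix.mul_assoc, (Cliff_mul hU).2, one_mul, hA]

/-- A Hermitian involution sending Paulis to multiples of Paulis is Clifford. -/
lemma mem_Cliff {U : Mat q} (hh : Uᴴ = U) (hs : U * U = 1)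
    (h : ∀ a, ∃ (c : ℂ) (b : _), U * PauliOp a * U = c • PauliOp b) : U ∈ Cliff q := by
  refine ⟨?_, ?_⟩
  · rw [Matrix.mem_unitaryGroup_iff, Matrix.star_eq_conjTranspose, hh, hs]
  · rintro _ ⟨a, rfl⟩
    obtain ⟨c, b, hb⟩ := h a
    have h1 : (U * PauliOp a * U) * (U * PauliOp a * U) = 1 := by
      have : (U * PauliOp a * U) * (U * PauliOp a * U)
        = U * (PauliOp a * ((U * U) * PauliOp a)) * U := by noncomm_ring
      rw [this, hs, one_mul, P_sq, mul_one, hs]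
    have h2 : (c * c) • (1 : Mat q) = 1 := by
      rw [← P_sq b, ← smul_mul_smul_comm, ← hb, h1, P_sq]
    have h3 : c * c = 1 := by
      have := congrFun (congrFun h2 0) 0
      simpa using this
    refine ⟨_, ⟨b, rfl⟩, ?_⟩
    rw [hh, Matrix.mul_smul, Matrix.smul_mul, hb]
    rcases mul_self_eq_one_iff.1 h3 with rfl | rfl
    · left; simp
    · right; simp

lemma P_Cliff (b : Fin q → Fin 4) : PauliOp b ∈ Cliff q := by
  refine mem_Cliff (P_herm b) (P_sq b) fun a => ?_
  rcases P_comm b a with h | h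
  · exact ⟨1, a, by rw [h, mul_assoc, P_sq]; simp⟩
  · exact ⟨-1, a, by rw [h, neg_mul, mul_assoc, P_sq]; simp⟩

lemma half_sqrt : ((Real.sqrt 2 : ℝ) : ℂ)⁻¹ * ((Real.sqrt 2 : ℝ) : ℂ)⁻¹ = 1 / 2 := by
  rw [← mul_inv, ← Complex.ofReal_mul, Real.mul_self_sqrt (by norm_num)]
  norm_num

/-- Transitivity step: anticommuting Paulis are exchanged by a Clifford. -/
lemma exch {a b : Fin q → Fin 4} (h : PauliOp a * PauliOp b = - (PauliOp b * PauliOp a)) :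
    ∃ U ∈ Cliff q, U * PauliOp a * Uᴴ = PauliOp b := by
  set P := PauliOp a with hP
  set Q := PauliOp b with hQ
  have hPP : P * P = 1 := P_sq a
  have hQQ : Q * Q = 1 := P_sq b
  have hPh : Pᴴ = P := P_herm a
  have hQh : Qᴴ = Q := P_herm b
  set s : ℂ := ((Real.sqrt 2 : ℝ) : ℂ)⁻¹ with hs
  have hss : s * s = 1 / 2 := half_sqrt
  have conj : ∀ X : Mat q, (s • (P + Q)) * X * (s • (P + Q))
      = (1 / 2 : ℂ) • ((P + Q) * X * (P + Q)) := by
    intro X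
    rw [Matrix.smul_mul, Matrix.smul_mul, Matrix.mul_smul, smul_smul, hss]
  have hUh : (s • (P + Q))ᴴ = s • (P + Q) := by
    have : star s = s := by simp [hs]
    rw [Matrix.conjTranspose_smul, Matrix.conjTranspose_add, hPh, hQh, this]
  refine ⟨s • (P + Q), mem_Cliff hUh ?_ ?_, ?_⟩
  · have := conj 1
    rw [mul_one, mul_one] at this
    rw [this]
    have : (P + Q) * (P + Q) = (2 : ℂ) • (1 : Mat q) := by
      rw [mul_add, add_mul, add_mul, hPP, hQQ, h, two_smul]; abel
    rw [this, smul_smul]; norm_num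
  · intro r
    set R := PauliOp r with hR
    rw [conj]
    have two : ∀ X : Mat q, (1 / 2 : ℂ) • (X + X) = X := by
      intro X; rw [← two_smul ℂ X, smul_smul]; norm_num
    rcases P_comm a r with h1 | h1 <;> rcases P_comm b r with h2 | h2 <;>
      rw [← hR] at h1 h2 <;> rw [← hP] at h1 <;> rw [← hQ] at h2
    · refine ⟨1, r, ?_⟩
      have : (P + Q) * R * (P + Q) = R + R := by
        rw [add_mul, h1, h2, ← mul_add, mul_assoc, mul_add, add_mul, add_mul, hPP, hQQ, h]
        noncomm_ring
      rw [this, two, one_smul]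
    · obtain ⟨c, u, hu⟩ := P_mul a b
      obtain ⟨c', v, hv⟩ := P_mul r u
      refine ⟨c * c', v, ?_⟩
      have : (P + Q) * R * (P + Q) = R * (P * Q) + R * (P * Q) := by
        rw [add_mul, h1, h2, ← sub_eq_add_neg, ← mul_sub, mul_assoc, mul_add, sub_mul, sub_mul,
          hPP, hQQ, h]
        noncomm_ring
      rw [this, two, hP, hQ, hu, Matrix.mul_smul, hR, hv, smul_smul]
    · obtain ⟨c, u, hu⟩ := P_mul b a
      obtain ⟨c', v, hv⟩ := P_mul r u
      refine ⟨c * c', v, ?_⟩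
      have : (P + Q) * R * (P + Q) = R * (Q * P) + R * (Q * P) := by
        rw [add_mul, h1, h2, add_comm (-(R * P)), ← sub_eq_add_neg, ← mul_sub, mul_assoc, mul_add,
          sub_mul, sub_mul, hPP, hQQ, h]
        noncomm_ring
      rw [this, two, hP, hQ, hu, Matrix.mul_smul, hR, hv, smul_smul]
    · refine ⟨-1, r, ?_⟩
      have : (P + Q) * R * (P + Q) = -R + -R := by
        rw [add_mul, h1, h2, ← neg_add, ← mul_add, neg_mul, mul_assoc, mul_add, add_mul, add_mul,
          hPP, hQQ, h]
        noncomm_ring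
      rw [this, two, hR]; simp
  · rw [hUh, conj]
    have : (P + Q) * P * (P + Q) = Q + Q := by
      rw [add_mul, add_mul, mul_add, mul_add, hPP, mul_assoc Q P P, hPP, mul_assoc Q P Q, h,
        mul_neg, ← mul_assoc, hQQ]
      noncomm_ring
    rw [this, ← two_smul ℂ Q, smul_smul]; norm_num

lemma exists_anti {a : Fin q → Fin 4} (ha : a ≠ 0) :
    ∃ r, PauliOp a * PauliOp r = - (PauliOp r * PauliOp a) := by
  by_contra hc
  push Not at hc
  have h1 : ∀ r, PauliOp r * PauliOp a * PauliOp r = PauliOp a := by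
    intro r
    rcases P_comm a r with h | h
    · rw [← h, mul_assoc, P_sq, mul_one]
    · exact absurd h (hc r)
  have h2 := P_twirl (PauliOp a)
  simp only [h1, P_trace a ha, mul_zero, zero_smul, Finset.sum_const, Finset.card_univ] at h2
  rw [← Nat.cast_smul_eq_nsmul ℂ, smul_eq_zero] at h2
  rcases h2 with h2 | h2
  · simp at h2
  · have h3 := P_sq a
    rw [h2, mul_zero] at h3
    have := congrFun (congrFun h3 0) 0
    simp at this

lemma exists_anti2 {a b : Fin q → Fin 4} (ha : a ≠ 0) (hb : b ≠ 0) :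
    ∃ r, PauliOp a * PauliOp r = - (PauliOp r * PauliOp a) ∧
      PauliOp r * PauliOp b = - (PauliOp b * PauliOp r) := by
  obtain ⟨r, hr⟩ := exists_anti ha
  obtain ⟨t, ht⟩ := exists_anti hb
  rcases P_comm r b with h1 | h1
  swap
  · exact ⟨r, hr, h1⟩
  rcases P_comm a t with h2 | h2
  swap
  · exact ⟨t, h2, by rw [ht, neg_neg]⟩
  obtain ⟨c, u, hu⟩ := P_mul r t
  have hc : c ≠ 0 := by
    rintro rfl
    rw [zero_smul] at hu
    have h3 : PauliOp r * (PauliOp r * PauliOp t) * PauliOp t = 1 := by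
      rw [← mul_assoc, P_sq, one_mul, P_sq]
    rw [hu] at h3
    have := congrFun (congrFun h3 0) 0
    simp at this
  refine ⟨u, ?_, ?_⟩
  · apply smul_right_injective (Mat q) hc
    change c • _ = c • _
    rw [smul_neg, ← Matrix.mul_smul, ← Matrix.smul_mul, ← hu, ← mul_assoc, hr, mul_assoc, neg_mul,
      mul_assoc, h2]
  · apply smul_right_injective (Mat q) hc
    change c • _ = c • _
    rw [smul_neg, ← Matrix.smul_mul, ← Matrix.mul_smul, ← hu, ← mul_assoc, ← h1, mul_assoc,
      mul_assoc, ht, mul_neg, neg_neg]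

lemma irred_Tl (W : Submodule ℂ (Mat q)) (hW : W ≤ Tl q)
    (hinv : ∀ U ∈ Cliff q, ∀ A ∈ W, U * A * Uᴴ ∈ W) : W = ⊥ ∨ W = Tl q := by
  by_cases h0 : W = ⊥
  · exact Or.inl h0
  right
  obtain ⟨A, hA, hA0⟩ := Submodule.exists_mem_ne_zero_of_ne_bot h0
  -- some Pauli component is nonzero
  obtain ⟨a, ha⟩ : ∃ a, (PauliOp a * A).trace ≠ 0 := by
    by_contra hc
    push Not at hc
    have := P_expand A
    simp only [hc, zero_smul, Finset.sum_const_zero] at this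
    exact hA0 ((smul_eq_zero.1 this.symm).resolve_left d_ne)
  have ha0 : a ≠ 0 := by
    rintro rfl
    rw [P_zero, one_mul] at ha
    exact ha ((mem_Tl _).1 (hW hA))
  have haW : PauliOp a ∈ W := by
    have h1 : PauliOp a * ∑ r, PauliOp r * (PauliOp a * A) * PauliOp r ∈ W := by
      rw [Finset.mul_sum]
      refine Submodule.sum_mem _ fun r _ => ?_
      have hr := hinv _ (P_Cliff r) A hA
      rw [P_herm] at hr
      have e : PauliOp a * (PauliOp r * (PauliOp a * A) * PauliOp r)
        = (PauliOp a * PauliOp r) * PauliOp a * A * PauliOp r := by noncomm_ring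
      rw [e]
      rcases P_comm a r with h | h
      · rw [h, mul_assoc (PauliOp r) (PauliOp a) (PauliOp a), P_sq, mul_one]; exact hr
      · rw [h, neg_mul, mul_assoc (PauliOp r) (PauliOp a) (PauliOp a), P_sq, mul_one, neg_mul, neg_mul]
        exact W.neg_mem hr
    rw [P_twirl, Matrix.mul_smul, mul_one] at h1
    exact (Submodule.smul_mem_iff _ (mul_ne_zero d_ne ha)).1 h1
  apply le_antisymm hW
  rw [Tl_eq_span, Submodule.span_le]
  intro M hM
  obtain ⟨b, hb, rfl⟩ := (mem_sigmaSet_iff _).1 hM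
  refine W.smul_mem _ ?_
  obtain ⟨r, h1, h2⟩ := exists_anti2 ha0 hb
  obtain ⟨U, hU, e1⟩ := exch h1
  obtain ⟨V, hV, e2⟩ := exch h2
  rw [← e2, ← e1]
  exact hinv V hV _ (hinv U hU _ haW)

/-- Data saying that `F` embeds the traceless matrices equivariantly. -/
structure GoodMap (F : Mat q →ₗ[ℂ] BMat q) : Prop where
  equi : ∀ U ∈ Cliff q, ∀ A, F (U * A * Uᴴ) = twoCopy U (F A)
  inj : ∀ A ∈ Tl q, F A = 0 → A = 0

lemma GoodMap.isInvariant {F : Mat q →ₗ[ℂ] BMat q} (hF : GoodMap F) :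
    IsInvariant q ((Tl q).map F) := by
  rintro U hU _ ⟨A, hA, rfl⟩
  exact ⟨_, Tl_inv hU hA, hF.equi U hU A⟩

lemma Tl_ne_bot (hq : 2 ≤ q) : Tl q ≠ ⊥ := by
  intro h
  have h1 : (fun _ => 1 : Fin q → Fin 4) ≠ 0 := by
    intro h
    have := congrFun h ⟨0, by omega⟩
    simp at this
  have h2 : PauliOp (fun _ => 1 : Fin q → Fin 4) ∈ Tl q := (mem_Tl _).2 (P_trace _ h1)
  rw [h, Submodule.mem_bot] at h2
  have h3 := P_sq (fun _ => 1 : Fin q → Fin 4)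
  rw [h2, mul_zero] at h3
  have := congrFun (congrFun h3 0) 0
  simp at this

lemma GoodMap.carriesIrred (hq : 2 ≤ q) {F : Mat q →ₗ[ℂ] BMat q} (hF : GoodMap F) :
    CarriesIrred q ((Tl q).map F) := by
  refine ⟨?_, hF.isInvariant, ?_⟩
  · intro h
    apply Tl_ne_bot hq
    rw [eq_bot_iff]
    intro A hA
    have : F A ∈ (Tl q).map F := ⟨A, hA, rfl⟩
    rw [h, Submodule.mem_bot] at this
    exact (Submodule.mem_bot ℂ).2 (hF.inj A hA this)
  · intro W' hW' hinv
    have key : W' = (W'.comap F ⊓ Tl q).map F := by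
      apply le_antisymm
      · intro x hx
        obtain ⟨A, hA, rfl⟩ := hW' hx
        exact ⟨A, ⟨hx, hA⟩, rfl⟩
      · rintro _ ⟨A, ⟨hA, -⟩, rfl⟩
        exact hA
    rcases irred_Tl (W'.comap F ⊓ Tl q) inf_le_right (by
      rintro U hU A ⟨hA, hA'⟩
      refine ⟨?_, Tl_inv hU hA'⟩
      change F _ ∈ W'
      rw [hF.equi U hU A]
      exact hinv U hU _ hA) with h | h
    · left; rw [key, h, Submodule.map_bot]
    · right; rw [key, h]

lemma GoodMap.equivRep {F G : Mat q →ₗ[ℂ] BMat q} (hF : GoodMap F) (hG : GoodMap G) :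
    EquivRep q ((Tl q).map F) ((Tl q).map G) := by
  have hker : LinearMap.ker (F.domRestrict (Tl q)) = ⊥ := by
    rw [LinearMap.ker_eq_bot']
    rintro ⟨A, hA⟩ h
    exact Subtype.ext (hF.inj A hA h)
  obtain ⟨L, hL⟩ := LinearMap.exists_leftInverse_of_injective _ hker
  have hL' : ∀ A ∈ Tl q, ((L (F A) : Tl q) : Mat q) = A := by
    intro A hA
    have := LinearMap.congr_fun hL ⟨A, hA⟩
    exact congrArg Subtype.val this
  refine ⟨G ∘ₗ (Tl q).subtype ∘ₗ L, ?_, ?_, ?_⟩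
  · ext y
    constructor
    · rintro ⟨_, ⟨A, hA, rfl⟩, rfl⟩
      exact ⟨A, hA, by simp [hL' A hA]⟩
    · rintro ⟨A, hA, rfl⟩
      exact ⟨F A, ⟨A, hA, rfl⟩, by simp [hL' A hA]⟩
  · rintro _ ⟨A, hA, rfl⟩ h
    simp only [LinearMap.comp_apply, Submodule.subtype_apply, hL' A hA] at h
    rw [hG.inj A hA h, map_zero]
  · rintro U hU _ ⟨A, hA, rfl⟩
    simp only [LinearMap.comp_apply, Submodule.subtype_apply, hL' A hA]
    rw [← hF.equi U hU, hL' _ (Tl_inv hU hA), hG.equi U hU]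

lemma span_eq_map (F : Mat q →ₗ[ℂ] BMat q) (v : Mat q → BMat q)
    (h : ∀ τ ∈ sigmaSet q, ∃ c : ℂ, c ≠ 0 ∧ v τ = c • F τ) :
    Submodule.span ℂ {M | ∃ τ ∈ sigmaSet q, M = v τ} = (Tl q).map F := by
  rw [Tl_eq_span, Submodule.map_span]
  apply le_antisymm
  · rw [Submodule.span_le]
    rintro _ ⟨τ, hτ, rfl⟩
    obtain ⟨c, -, hc⟩ := h τ hτ
    rw [hc]
    exact Submodule.smul_mem _ _ (Submodule.subset_span ⟨τ, hτ, rfl⟩)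
  · rw [Submodule.span_le]
    rintro _ ⟨τ, hτ, rfl⟩
    obtain ⟨c, hc0, hc⟩ := h τ hτ
    have : F τ = c⁻¹ • v τ := by rw [hc, smul_smul, inv_mul_cancel₀ hc0, one_smul]
    rw [this]
    exact Submodule.smul_mem _ _ (Submodule.subset_span ⟨τ, hτ, rfl⟩)

/-- The swap operator. -/
def SW (q : ℕ) : BMat q := (1 : BMat q).submatrix id Prod.swap

lemma SW_kron (A B : Mat q) : SW q * (A ⊗ₖ B) = (B ⊗ₖ A) * SW q := by
  ext ⟨x, z⟩ ⟨y, w⟩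
  simp [SW, Matrix.mul_apply, Matrix.one_apply, Fintype.sum_prod_type, ite_and, mul_comm]

lemma SW_sq : SW q * SW q = 1 := by
  ext ⟨x, z⟩ ⟨y, w⟩
  simp [SW, Matrix.mul_apply, Matrix.one_apply, Fintype.sum_prod_type, ite_and]

lemma SW_sum : ∑ a, (PauliOp a ⊗ₖ PauliOp a : BMat q) = ((2 : ℂ) ^ q) • SW q := by
  ext ⟨x, z⟩ ⟨y, w⟩
  simp only [Matrix.sum_apply, Matrix.kronecker_apply, P_complete]
  simp [SW, Matrix.one_apply, eq_comm]

/-- right leg -/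
def onR (q : ℕ) : Mat q →ₗ[ℂ] BMat q where
  toFun A := (1 : Mat q) ⊗ₖ A
  map_add' _ _ := Matrix.kronecker_add _ _ _
  map_smul' _ _ := Matrix.kronecker_smul _ _ _

/-- left leg -/
def onL (q : ℕ) : Mat q →ₗ[ℂ] BMat q where
  toFun A := A ⊗ₖ (1 : Mat q)
  map_add' _ _ := Matrix.add_kronecker _ _ _
  map_smul' _ _ := Matrix.smul_kronecker _ _ _

lemma twoCopy_kron (U A B : Mat q) :
    twoCopy U (A ⊗ₖ B) = (U * A * Uᴴ) ⊗ₖ (U * B * Uᴴ) := by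
  simp [twoCopy, Matrix.conjTranspose_kronecker, Matrix.mul_kronecker_mul]

lemma twoCopy_SW (U : Mat q) (M : BMat q) : twoCopy U (SW q * M) = SW q * twoCopy U M := by
  simp only [twoCopy, LinearMap.coe_mk, AddHom.coe_mk]
  rw [← mul_assoc, ← SW_kron, mul_assoc, mul_assoc, mul_assoc]

lemma onR_equi {U : Mat q} (hU : U ∈ Cliff q) (A : Mat q) :
    onR q (U * A * Uᴴ) = twoCopy U (onR q A) := by
  simp only [onR, LinearMap.coe_mk, AddHom.coe_mk, twoCopy_kron]
  rw [mul_one, (Cliff_mul hU).1]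

lemma onL_equi {U : Mat q} (hU : U ∈ Cliff q) (A : Mat q) :
    onL q (U * A * Uᴴ) = twoCopy U (onL q A) := by
  simp only [onL, LinearMap.coe_mk, AddHom.coe_mk, twoCopy_kron]
  rw [mul_one, (Cliff_mul hU).1]

/-- partial trace over the left leg -/
lemma ptrace_inj (A : Mat q) (hA : A ∈ Tl q) (s t : ℂ) (hs : s ≠ 0)
    (h : s • onR q A + t • onL q A = 0) : A = 0 := by
  rw [mem_Tl] at hA
  ext z w
  have h1 : ∑ x : Idx q, (s • onR q A + t • onL q A) (x, z) (x, w) = 0 := by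
    rw [h]; simp
  simp only [onR, onL, LinearMap.coe_mk, AddHom.coe_mk, Matrix.add_apply, Matrix.smul_apply,
    Matrix.kronecker_apply, Matrix.one_apply_eq, smul_eq_mul, Finset.sum_add_distrib,
    ← Finset.mul_sum, ← Finset.sum_mul] at h1
  have h2 : ∑ x, A x x = 0 := hA
  rw [h2] at h1
  simpa [hs] using h1

lemma good_R : GoodMap (onR q) where
  equi U hU A := onR_equi hU A
  inj A hA h := ptrace_inj A hA 1 0 one_ne_zero (by simp [h])

lemma good_L : GoodMap (onL q) where
  equi U hU A := onL_equi hU A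
  inj A hA h := by
    have e : onR q A = SW q * onL q A * SW q := by
      simp only [onR, onL, LinearMap.coe_mk, AddHom.coe_mk]
      rw [SW_kron, mul_assoc, SW_sq, mul_one]
    refine ptrace_inj A hA 1 0 one_ne_zero ?_
    rw [e, h]; simp

/-- antisymmetric adjoint embedding -/
def FA (q : ℕ) : Mat q →ₗ[ℂ] BMat q := LinearMap.mulLeft ℂ (SW q) ∘ₗ (onR q - onL q)

/-- symmetric adjoint embedding -/
def FS (q : ℕ) : Mat q →ₗ[ℂ] BMat q :=
  LinearMap.mulLeft ℂ ((2 : ℂ) ^ q • SW q - (2 : ℂ) • 1) ∘ₗ (onR q + onL q)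

lemma good_A : GoodMap (FA q) where
  equi U hU A := by
    simp [FA, onR_equi hU, onL_equi hU, twoCopy_SW]
  inj A hA h := by
    have h1 : SW q * (onR q A - onL q A) = 0 := h
    have h2 : onR q A - onL q A = 0 := by
      rw [← one_mul (onR q A - onL q A), ← SW_sq, mul_assoc, h1, mul_zero]
    exact ptrace_inj A hA 1 (-1) one_ne_zero (by rw [← h2]; simp [sub_eq_add_neg])

lemma good_S (hq : 2 ≤ q) : GoodMap (FS q) where
  equi U hU A := by
    simp [FS, onR_equi hU, onL_equi hU, twoCopy_SW, sub_mul]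
  inj A hA h := by
    have h1 : ((2 : ℂ) ^ q • SW q - (2 : ℂ) • 1) * (onR q A + onL q A) = 0 := h
    have h3 : ((2 : ℂ) ^ q • SW q + (2 : ℂ) • 1) * ((2 : ℂ) ^ q • SW q - (2 : ℂ) • 1)
        = ((2 : ℂ) ^ q * 2 ^ q - 4) • (1 : BMat q) := by
      simp only [add_mul, mul_sub, smul_mul_smul_comm, SW_sq, mul_one, one_mul]
      module
    have h4 : ((2 : ℂ) ^ q * 2 ^ q - 4) ≠ 0 := by
      have : (4 : ℝ) < 2 ^ q * 2 ^ q := by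
        have : (2 : ℝ) ^ 2 ≤ 2 ^ q := pow_le_pow_right₀ (by norm_num) hq
        nlinarith
      intro h
      have h' : ((2 : ℝ) ^ q * 2 ^ q - 4) = 0 := by exact_mod_cast h
      linarith
    have h2 : onR q A + onL q A = 0 := by
      have : ((2 : ℂ) ^ q * 2 ^ q - 4) • (onR q A + onL q A) = 0 := by
        rw [← one_mul (onR q A + onL q A), ← smul_mul_assoc, ← h3, mul_assoc, h1, mul_zero]
      exact (smul_eq_zero.1 this).resolve_left h4
    exact ptrace_inj A hA 1 1 one_ne_zero (by simpa using h2)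

lemma finsum_pauli {E : Type*} [AddCommMonoid E] (S : Set (Mat q)) (hS : S ⊆ sigmaSet q)
    (g : Mat q → E) [DecidablePred (· ∈ S)] :
    ∑ᶠ σ ∈ S, g σ = ∑ a : Fin q → Fin 4,
      if (sqrtd q)⁻¹ • PauliOp a ∈ S then g ((sqrtd q)⁻¹ • PauliOp a) else 0 := by
  have hinj : Function.Injective (fun a : Fin q → Fin 4 => (sqrtd q)⁻¹ • PauliOp a) :=
    (smul_right_injective (Mat q) (inv_ne_zero sqrtd_ne)).comp P_inj
  have hS' : S = (fun a : Fin q → Fin 4 => (sqrtd q)⁻¹ • PauliOp a) ''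
      ((fun a : Fin q → Fin 4 => (sqrtd q)⁻¹ • PauliOp a) ⁻¹' S) := by
    rw [Set.image_preimage_eq_of_subset]
    intro M hM
    obtain ⟨a, -, rfl⟩ := (mem_sigmaSet_iff _).1 (hS hM)
    exact ⟨a, rfl⟩
  conv_lhs => rw [hS']
  rw [finsum_mem_image hinj.injOn, finsum_mem_def, finsum_eq_sum_of_fintype]
  refine Finset.sum_congr rfl fun a _ => ?_
  by_cases h : (sqrtd q)⁻¹ • PauliOp a ∈ S
  · simp [h]
  · simp [h]

lemma E_R (a b : Fin q → Fin 4) :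
    (PauliOp a ⊗ₖ PauliOp a) * onR q (PauliOp b) = PauliOp a ⊗ₖ (PauliOp a * PauliOp b) := by
  simp [onR, ← Matrix.mul_kronecker_mul]

lemma E_L (a b : Fin q → Fin 4) :
    (PauliOp a ⊗ₖ PauliOp a) * onL q (PauliOp b) = (PauliOp a * PauliOp b) ⊗ₖ PauliOp a := by
  simp [onL, ← Matrix.mul_kronecker_mul]

lemma R_E (a b : Fin q → Fin 4) :
    onR q (PauliOp b) * (PauliOp a ⊗ₖ PauliOp a) = PauliOp a ⊗ₖ (PauliOp b * PauliOp a) := by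
  simp [onR, ← Matrix.mul_kronecker_mul]

lemma L_E (a b : Fin q → Fin 4) :
    onL q (PauliOp b) * (PauliOp a ⊗ₖ PauliOp a) = (PauliOp b * PauliOp a) ⊗ₖ PauliOp a := by
  simp [onL, ← Matrix.mul_kronecker_mul]

lemma R_SW (A : Mat q) : onR q A * SW q = SW q * onL q A := by
  simp [onR, onL, SW_kron]

lemma L_SW (A : Mat q) : onL q A * SW q = SW q * onR q A := by
  simp [onR, onL, SW_kron]

lemma kron_neg (A B : Mat q) : A ⊗ₖ (-B) = -(A ⊗ₖ B) := by
  ext; simp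

lemma neg_kron (A B : Mat q) : (-A) ⊗ₖ B = -(A ⊗ₖ B) := by
  ext; simp

lemma not_comm_of_anti {a b : Fin q → Fin 4}
    (h : PauliOp a * PauliOp b = - (PauliOp b * PauliOp a)) :
    ¬ PauliOp a * PauliOp b = PauliOp b * PauliOp a := by
  intro h'
  rw [h'] at h
  have h0 : PauliOp b * PauliOp a = 0 := by
    have h4 : (2 : ℂ) • (PauliOp b * PauliOp a) = 0 := by
      rw [two_smul]; exact add_eq_zero_iff_eq_neg.2 h
    exact (smul_eq_zero.1 h4).resolve_left two_ne_zero
  have h3 : PauliOp b * (PauliOp b * PauliOp a) * PauliOp a = 1 := by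
    rw [← mul_assoc, P_sq, one_mul, P_sq]
  rw [h0] at h3
  have := congrFun (congrFun h3 0) 0
  simp at this

open Classical in
lemma sumS (b : Fin q → Fin 4) (hb : b ≠ 0) :
    (∑ a, if a ≠ 0 ∧ a ≠ b ∧ PauliOp a * PauliOp b = PauliOp b * PauliOp a then
      PauliOp a ⊗ₖ (PauliOp a * PauliOp b) + (PauliOp a * PauliOp b) ⊗ₖ PauliOp a else 0)
      = FS q (PauliOp b) := by
  set K := onR q (PauliOp b) + onL q (PauliOp b) with hK
  have h1 : ∀ a, (if a ≠ 0 ∧ a ≠ b ∧ PauliOp a * PauliOp b = PauliOp b * PauliOp a then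
      PauliOp a ⊗ₖ (PauliOp a * PauliOp b) + (PauliOp a * PauliOp b) ⊗ₖ PauliOp a else 0)
      = (1 / 2 : ℂ) • ((PauliOp a ⊗ₖ PauliOp a) * K + K * (PauliOp a ⊗ₖ PauliOp a))
        - (if a = 0 then K else 0) - (if a = b then K else 0) := by
    intro a
    rw [hK, mul_add, add_mul, E_R, E_L, R_E, L_E]
    rcases P_comm a b with h | h
    · rw [← h]
      by_cases ha : a = 0
      · subst ha
        rw [if_neg (by simp), if_pos rfl, if_neg (Ne.symm hb), P_zero]
        simp only [onR, onL, LinearMap.coe_mk, AddHom.coe_mk, one_mul]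
        module
      · by_cases hab : a = b
        · subst hab
          rw [if_neg (by simp), if_neg ha, if_pos rfl, P_sq]
          simp only [onR, onL, LinearMap.coe_mk, AddHom.coe_mk]
          module
        · rw [if_pos ⟨ha, hab, rfl⟩, if_neg ha, if_neg hab]
          module
    · have hn := not_comm_of_anti h
      have ha : a ≠ 0 := by
        rintro rfl
        exact hn (by simp [P_zero])
      have hab : a ≠ b := by
        rintro rfl
        exact hn rfl
      rw [if_neg (fun hh => hn hh.2.2), if_neg ha, if_neg hab, h, kron_neg, neg_kron]
      module
  simp only [h1]
  rw [Finset.sum_sub_distrib, Finset.sum_sub_distrib, ← Finset.smul_sum, Finset.sum_add_distrib,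
    ← Finset.sum_mul, ← Finset.mul_sum, SW_sum]
  have hc : K * SW q = SW q * K := by rw [hK, add_mul, mul_add, R_SW, L_SW, add_comm]
  simp only [Finset.sum_ite_eq', Finset.mem_univ, if_true, mul_smul_comm, smul_mul_assoc, hc]
  simp only [FS, LinearMap.comp_apply, LinearMap.mulLeft_apply, LinearMap.add_apply, ← hK, sub_mul,
    smul_mul_assoc, one_mul]
  module

open Classical in
lemma sumA (b : Fin q → Fin 4) :
    (∑ a, if a ≠ 0 ∧ PauliOp a * PauliOp b = -(PauliOp b * PauliOp a) then
      PauliOp a ⊗ₖ (PauliOp a * PauliOp b) - (PauliOp a * PauliOp b) ⊗ₖ PauliOp a else 0)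
      = (2 : ℂ) ^ q • FA q (PauliOp b) := by
  set K := onR q (PauliOp b) - onL q (PauliOp b) with hK
  have h1 : ∀ a, (if a ≠ 0 ∧ PauliOp a * PauliOp b = -(PauliOp b * PauliOp a) then
      PauliOp a ⊗ₖ (PauliOp a * PauliOp b) - (PauliOp a * PauliOp b) ⊗ₖ PauliOp a else 0)
      = (1 / 2 : ℂ) • ((PauliOp a ⊗ₖ PauliOp a) * K - K * (PauliOp a ⊗ₖ PauliOp a)) := by
    intro a
    rw [hK, mul_sub, sub_mul, E_R, E_L, R_E, L_E]
    by_cases h : PauliOp a * PauliOp b = -(PauliOp b * PauliOp a)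
    · have ha : a ≠ 0 := by
        rintro rfl
        exact not_comm_of_anti h (by simp [P_zero])
      rw [if_pos ⟨ha, h⟩, h, kron_neg, neg_kron]
      module
    · rw [if_neg (fun hh => h hh.2), (P_comm a b).resolve_right h]
      module
  simp only [h1]
  rw [← Finset.smul_sum, Finset.sum_sub_distrib, ← Finset.sum_mul, ← Finset.mul_sum, SW_sum]
  have hc : K * SW q = -(SW q * K) := by rw [hK, sub_mul, mul_sub, R_SW, L_SW, neg_sub]
  simp only [mul_smul_comm, smul_mul_assoc, hc]
  simp only [FA, LinearMap.comp_apply, LinearMap.mulLeft_apply, LinearMap.sub_apply, ← hK]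
  module

lemma smul_P_mul (a b : Fin q → Fin 4) : ((sqrtd q)⁻¹ • PauliOp a) * ((sqrtd q)⁻¹ • PauliOp b)
    = ((2 : ℂ) ^ q)⁻¹ • (PauliOp a * PauliOp b) := by
  rw [smul_mul_smul_comm, ← mul_inv, sqrtd_mul]

lemma nprod_P (a b : Fin q → Fin 4) :
    nprod ((sqrtd q)⁻¹ • PauliOp a) ((sqrtd q)⁻¹ • PauliOp b)
    = (sqrtd q)⁻¹ • (PauliOp a * PauliOp b) := by
  rw [nprod, smul_mul_smul_comm, smul_smul, mul_inv_cancel_left₀ sqrtd_ne]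

lemma smulP_inj {a b : Fin q → Fin 4} :
    (sqrtd q)⁻¹ • PauliOp a = (sqrtd q)⁻¹ • PauliOp b ↔ a = b :=
  ⟨fun h => P_inj (smul_right_injective (Mat q) (inv_ne_zero sqrtd_ne) h), fun h => h ▸ rfl⟩

lemma smulP_mem {a : Fin q → Fin 4} : (sqrtd q)⁻¹ • PauliOp a ∈ sigmaSet q ↔ a ≠ 0 := by
  rw [mem_sigmaSet_iff]
  constructor
  · rintro ⟨b, hb, h⟩
    rw [smulP_inj.1 h]; exact hb
  · intro h; exact ⟨a, h, rfl⟩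

lemma mem_CSet_iff (a b : Fin q → Fin 4) :
    (sqrtd q)⁻¹ • PauliOp a ∈ CSet ((sqrtd q)⁻¹ • PauliOp b) ↔
      a ≠ 0 ∧ a ≠ b ∧ PauliOp a * PauliOp b = PauliOp b * PauliOp a := by
  change _ ∧ _ ∧ _ ↔ _
  rw [smulP_mem, smulP_inj.ne, smul_P_mul, smul_P_mul,
    (smul_right_injective (Mat q) (inv_ne_zero d_ne)).eq_iff]

lemma mem_NSet_iff (a b : Fin q → Fin 4) :
    (sqrtd q)⁻¹ • PauliOp a ∈ NSet ((sqrtd q)⁻¹ • PauliOp b) ↔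
      a ≠ 0 ∧ PauliOp a * PauliOp b = -(PauliOp b * PauliOp a) := by
  change _ ∧ _ ↔ _
  rw [smulP_mem, smul_P_mul, smul_P_mul, ← smul_add, smul_eq_zero,
    or_iff_right (inv_ne_zero d_ne), add_eq_zero_iff_eq_neg]

lemma sqrt2_ne : ((Real.sqrt 2 : ℝ) : ℂ) ≠ 0 := by
  rw [Complex.ofReal_ne_zero]; positivity

lemma finsumS (b : Fin q → Fin 4) (hb : b ≠ 0) :
    ∑ᶠ σ ∈ CSet ((sqrtd q)⁻¹ • PauliOp b), SVec σ (nprod σ ((sqrtd q)⁻¹ • PauliOp b))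
      = (((Real.sqrt 2 : ℝ) : ℂ)⁻¹ * (sqrtd q)⁻¹) • FS q ((sqrtd q)⁻¹ • PauliOp b) := by
  classical
  rw [finsum_pauli _ (fun _ h => h.1), map_smul, ← sumS b hb, Finset.smul_sum, Finset.smul_sum]
  refine Finset.sum_congr rfl fun a _ => ?_
  simp only [mem_CSet_iff]
  split_ifs
  · rw [nprod_P, SVec]
    simp only [Matrix.kronecker_smul, Matrix.smul_kronecker]
    module
  · simp

lemma finsumA (b : Fin q → Fin 4) :
    ∑ᶠ σ ∈ NSet ((sqrtd q)⁻¹ • PauliOp b), AVec σ (Complex.I • nprod σ ((sqrtd q)⁻¹ • PauliOp b))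
      = (((Real.sqrt 2 : ℝ) : ℂ)⁻¹ * (sqrtd q)⁻¹ * Complex.I * 2 ^ q) •
        FA q ((sqrtd q)⁻¹ • PauliOp b) := by
  classical
  rw [finsum_pauli _ (fun _ h => h.1), map_smul, mul_smul, smul_comm ((2 : ℂ) ^ q), ← sumA b,
    Finset.smul_sum, Finset.smul_sum]
  refine Finset.sum_congr rfl fun a _ => ?_
  simp only [mem_NSet_iff]
  split_ifs
  · rw [nprod_P, AVec]
    simp only [Matrix.kronecker_smul, Matrix.smul_kronecker]
    module
  · simp

lemma sigmaSet_finite : (sigmaSet q).Finite := by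
  refine (Set.finite_range (fun a : Fin q → Fin 4 => (sqrtd q)⁻¹ • PauliOp a)).subset ?_
  rintro _ ⟨⟨a, rfl⟩, -⟩
  exact ⟨a, rfl⟩

/-- the normalisation constants do not vanish, since the sums do not -/
lemma norm_ne (S : Set (Mat q)) (hS : S ⊆ sigmaSet q) (g : Mat q → BMat q)
    (h : ∑ᶠ σ ∈ S, g σ ≠ 0) : ((Real.sqrt (2 * (S.ncard : ℝ)) : ℝ) : ℂ)⁻¹ ≠ 0 := by
  have hne : S.Nonempty := by
    by_contra hc
    rw [Set.not_nonempty_iff_eq_empty] at hc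
    subst hc
    simp at h
  have : 0 < S.ncard := (Set.ncard_pos (sigmaSet_finite.subset hS)).2 hne
  apply inv_ne_zero
  rw [Complex.ofReal_ne_zero]
  positivity

lemma P_ne_zero (b : Fin q → Fin 4) : (sqrtd q)⁻¹ • PauliOp b ≠ 0 := by
  intro h
  have h2 := (smul_eq_zero.1 h).resolve_left (inv_ne_zero sqrtd_ne)
  have h3 := P_sq b
  rw [h2, mul_zero] at h3
  have := congrFun (congrFun h3 0) 0
  simp at this

lemma sigmaSet_Tl {τ : Mat q} (h : τ ∈ sigmaSet q) : τ ∈ Tl q := by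
  rw [Tl_eq_span]; exact Submodule.subset_span h

lemma Vr_eq : Vr q = (Tl q).map (onR q) :=
  span_eq_map (onR q) (fun τ => sigma0 q ⊗ₖ τ) fun τ _ =>
    ⟨(sqrtd q)⁻¹, inv_ne_zero sqrtd_ne, by simp [sigma0, onR, Matrix.smul_kronecker]⟩

lemma Vl_eq : Vl q = (Tl q).map (onL q) :=
  span_eq_map (onL q) (fun τ => τ ⊗ₖ sigma0 q) fun τ _ =>
    ⟨(sqrtd q)⁻¹, inv_ne_zero sqrtd_ne, by simp [sigma0, onL, Matrix.kronecker_smul]⟩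

lemma VadjS_eq (hq : 2 ≤ q) : VadjS q = (Tl q).map (FS q) := by
  refine span_eq_map (FS q) vadjS fun τ hτ => ?_
  have hT := sigmaSet_Tl hτ
  obtain ⟨b, hb, rfl⟩ := (mem_sigmaSet_iff _).1 hτ
  have hc : ((Real.sqrt 2 : ℝ) : ℂ)⁻¹ * (sqrtd q)⁻¹ ≠ 0 :=
    mul_ne_zero (inv_ne_zero sqrt2_ne) (inv_ne_zero sqrtd_ne)
  have hne : FS q ((sqrtd q)⁻¹ • PauliOp b) ≠ 0 := fun h =>
    P_ne_zero b ((good_S hq).inj _ hT h)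
  have hf := finsumS b hb
  have hn := norm_ne (CSet ((sqrtd q)⁻¹ • PauliOp b)) (fun _ h => h.1) _
    (by rw [hf]; exact smul_ne_zero hc hne)
  exact ⟨_, mul_ne_zero hn hc, by rw [vadjS, hf, smul_smul]⟩

lemma VadjA_eq : VadjA q = (Tl q).map (FA q) := by
  refine span_eq_map (FA q) vadjA fun τ hτ => ?_
  have hT := sigmaSet_Tl hτ
  obtain ⟨b, hb, rfl⟩ := (mem_sigmaSet_iff _).1 hτ
  have hc : ((Real.sqrt 2 : ℝ) : ℂ)⁻¹ * (sqrtd q)⁻¹ * Complex.I * 2 ^ q ≠ 0 :=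
    mul_ne_zero (mul_ne_zero (mul_ne_zero (inv_ne_zero sqrt2_ne) (inv_ne_zero sqrtd_ne))
      Complex.I_ne_zero) d_ne
  have hne : FA q ((sqrtd q)⁻¹ • PauliOp b) ≠ 0 := fun h =>
    P_ne_zero b (good_A.inj _ hT h)
  have hf := finsumA b
  have hn := norm_ne (NSet ((sqrtd q)⁻¹ • PauliOp b)) (fun _ h => h.1) _
    (by rw [hf]; exact smul_ne_zero hc hne)
  exact ⟨_, mul_ne_zero hn hc, by rw [vadjA, hf, smul_smul]⟩

end Helpers

/-- Lemma: adjoint representations: `V_r`, `V_l`, `V_[adj]`, `V_{adj}`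
are invariant and carry pairwise equivalent irreducible subrepresentations. -/
theorem statement7 (q : ℕ) (hq : 2 ≤ q) :
    IsInvariant q (Vr q) ∧ IsInvariant q (Vl q) ∧
    IsInvariant q (VadjS q) ∧ IsInvariant q (VadjA q) ∧
    CarriesIrred q (Vr q) ∧ CarriesIrred q (Vl q) ∧
    CarriesIrred q (VadjS q) ∧ CarriesIrred q (VadjA q) ∧
    EquivRep q (Vr q) (Vl q) ∧ EquivRep q (Vr q) (VadjS q) ∧
    EquivRep q (Vr q) (VadjA q) ∧ EquivRep q (Vl q) (VadjS q) ∧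
    EquivRep q (Vl q) (VadjA q) ∧ EquivRep q (VadjS q) (VadjA q) := by
  have hR : GoodMap (onR q) := good_R
  have hL : GoodMap (onL q) := good_L
  have hS : GoodMap (FS q) := good_S hq
  have hA : GoodMap (FA q) := good_A
  rw [Vr_eq, Vl_eq, VadjS_eq hq, VadjA_eq]
  exact ⟨hR.isInvariant, hL.isInvariant, hS.isInvariant, hA.isInvariant,
    hR.carriesIrred hq, hL.carriesIrred hq, hS.carriesIrred hq, hA.carriesIrred hq,
    hR.equivRep hL, hR.equivRep hS, hR.equivRep hA, hL.equivRep hS, hL.equivRep hA,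
    hS.equivRep hA⟩

end CliffordPaper
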